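/- arXiv:1305.1759 — 4 statements merged into one kernel-verified Lean document; each statement's English description precedes it below -/
import Mathlib

section
/- Let V be a real vector space, M₀ ∈ V with M₀ ≠ 0, Q : V → V a linear map whose kernel equals the span of M₀, and ι : V → ℝ a linear functional with ι(M₀) = 1. Let ν ≥ 1, Δt ∈ ℝ, r ∈ V, and let A be an invertible ν×ν real matrix with last row w (A_{νj} = w_j) and Ã a ν×ν real matrix with last row w̃ (Ã_{νj} = w̃_j). Suppose the stages R : Fin ν → V satisfy, for every k, Σ_j A_{kj} • Q(R_j) = 0 and R_k = r + Δt Σ_j Ã_{kj} • F_j + Δt Σ_j A_{kj} • G_j for some families F, G : Fin ν → V, and define the numerical solution r' = r + Δt Σ_k w̃_k • F_k + Δt Σ_k w_k • G_k. Then r' = ι(r') • M₀, i.e. the numerical solution is projected onto the equilibrium with coefficient ρ' = ι(r'). -/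
/-!
Invertibility of `A` decouples the constraints `Σ_j A_{kj} • Q(R_j) = 0`: applying a left inverse
of `A` gives `Q(R_k) = 0` for every stage, so each stage is a multiple of `M₀`. Global stiff
accuracy says that `r'` is the last stage, and `ι M₀ = 1` identifies the multiple as `ι r'`.
-/

/-- An invertible square matrix acts with trivial kernel on families of vectors in a module. -/
lemma eq_zero_of_isUnit_of_sum_smul_eq_zero {m V : Type*} [Fintype m] [DecidableEq m]
    [AddCommGroup V] [Module ℝ V] {A : Matrix m m ℝ} (hA : IsUnit A) {x : m → V}
    (h : ∀ k, ∑ j, A k j • x j = 0) (i : m) : x i = 0 := by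
  obtain ⟨B, hB⟩ := hA.exists_left_inv
  calc x i = ∑ j, (B * A) i j • x j := by simp [hB, Matrix.one_apply]
    _ = ∑ k, B i k • ∑ j, A k j • x j := by
      simp only [Matrix.mul_apply, Finset.sum_smul, Finset.smul_sum, mul_smul]
      exact Finset.sum_comm
    _ = 0 := by simp [h]

/-- Formal `ε → 0` limit of a type A, globally stiffly accurate IMEX scheme: if the
invertible implicit matrix `A` has last row `w`, the explicit matrix `Atil` has last
row `wtil`, the limit stage constraints `Σ_j A_{kj} • Q(R_j) = 0` hold with
`ker Q = span {M₀}`, and the stages satisfy the stage relations, then the numerical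
solution is projected onto the equilibrium: `r' = ι(r') • M₀`. -/
theorem typeA_gsa_equilibrium_projection (V : Type*) [AddCommGroup V] [Module ℝ V]
    (M₀ : V) (hM₀ : M₀ ≠ 0) (Q : V →ₗ[ℝ] V)
    (hker : LinearMap.ker Q = Submodule.span ℝ {M₀})
    (ι : V →ₗ[ℝ] ℝ) (hι : ι M₀ = 1)
    (n : ℕ) (Δt : ℝ) (r : V)
    (A Atil : Matrix (Fin (n + 1)) (Fin (n + 1)) ℝ) (hA : IsUnit A)
    (w wtil : Fin (n + 1) → ℝ)
    (hw : ∀ j, A (Fin.last n) j = w j)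
    (hwtil : ∀ j, Atil (Fin.last n) j = wtil j)
    (F G R : Fin (n + 1) → V)
    (hQR : ∀ k, ∑ j, A k j • Q (R j) = 0)
    (hR : ∀ k, R k = r + Δt • ∑ j, Atil k j • F j + Δt • ∑ j, A k j • G j)
    (r' : V)
    (hr' : r' = r + Δt • ∑ k, wtil k • F k + Δt • ∑ k, w k • G k) :
    r' = ι r' • M₀ := by
  have hlast : r' = R (Fin.last n) := by
    rw [hr', hR]
    simp only [hw, hwtil]
  have hmem : r' ∈ LinearMap.ker Q := by
    rw [LinearMap.mem_ker, hlast]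
    exact eq_zero_of_isUnit_of_sum_smul_eq_zero hA hQR (Fin.last n)
  rw [hker] at hmem
  obtain ⟨c, hc⟩ := Submodule.mem_span_singleton.mp hmem
  rw [← hc, map_smul, hι, smul_eq_mul, mul_one]
end

section
/- Let V be a real vector space, let Q, L : V → V be linear maps with ker L = ker Q, let ν ≥ 1, and let N be a strictly lower triangular ν×ν real matrix (N_{kj} = 0 for j ≥ k). Suppose R : Fin ν → V satisfies, for every k = 1, …, ν, L(R_k) = − Σ_{j=1}^{ν} N_{kj} • ( Q(R_j) − L(R_j) ). Then L(R_k) = 0 and Q(R_k) = 0 for every k. -/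
/-- Penalization lemma: if `Q` and `L` are linear maps with the same kernel, `N` is a
strictly lower triangular matrix, and the stages satisfy
`L(R_k) = - Σ_j N_{kj} • (Q(R_j) - L(R_j))`, then `L(R_k) = 0` and `Q(R_k) = 0`
for every `k`. -/
theorem penalization_projection (V : Type*) [AddCommGroup V] [Module ℝ V]
    (Q L : V →ₗ[ℝ] V) (hker : LinearMap.ker L = LinearMap.ker Q)
    (ν : ℕ) (hν : 1 ≤ ν)
    (N : Matrix (Fin ν) (Fin ν) ℝ)
    (hN : ∀ k j, k ≤ j → N k j = 0)
    (R : Fin ν → V)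
    (hR : ∀ k, L (R k) = - ∑ j, N k j • (Q (R j) - L (R j))) :
    ∀ k, L (R k) = 0 ∧ Q (R k) = 0 := by
  intro k
  induction k using WellFoundedLT.induction with
  | ind k ih =>
    -- By triangularity, row `k` only involves earlier stages, which lie in the common kernel.
    have hL : L (R k) = 0 := by
      rw [hR k, neg_eq_zero]
      refine Finset.sum_eq_zero fun j _ => ?_
      rcases lt_or_ge j k with hjk | hkj
      · rw [(ih j hjk).1, (ih j hjk).2, sub_zero, smul_zero]
      · rw [hN k j hkj, zero_smul]
    have hQ : R k ∈ LinearMap.ker Q := hker ▸ LinearMap.mem_ker.mpr hL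
    exact ⟨hL, LinearMap.mem_ker.mp hQ⟩
end

section
/- Let V be a real vector space, M₀ ∈ V with M₀ ≠ 0, and let Q, L : V → V be linear maps with ker Q = ker L = span{M₀}. Let ν ≥ 1, let A be an invertible lower triangular ν×ν real matrix and Ã a strictly lower triangular ν×ν real matrix. Suppose R : Fin ν → V satisfies, for every k = 1, …, ν, Σ_{j} Ã_{kj} • ( Q(R_j) − L(R_j) ) + Σ_{j} A_{kj} • L(R_j) = 0. Then Q(R_k) = 0, L(R_k) = 0, and R_k lies in the span of M₀ for every k. -/
/-!
The proof is forward substitution. An invertible triangular matrix has nonzero diagonal, since its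
determinant is the product of its diagonal entries. By strong induction on `k`, all earlier stages
satisfy `L (R j) = 0`, hence lie in `ker L = ker Q`, so `Q (R j) = 0` too. Strict lower triangularity
of `Atil` then kills the whole explicit sum at stage `k`, and lower triangularity of `A` leaves only
`A k k • L (R k) = 0`.
-/

/-- The `ε → 0` limit of the stage equations of a type A penalized IMEX scheme:
with `ker Q = ker L = span {M₀}`, `A` invertible lower triangular and `Atil`
strictly lower triangular, the relations
`Σ_j Ã_{kj} • (Q(R_j) - L(R_j)) + Σ_j A_{kj} • L(R_j) = 0` force every stage to be
projected onto the equilibrium. -/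
theorem penalized_typeA_projection (V : Type*) [AddCommGroup V] [Module ℝ V]
    (M₀ : V) (hM₀ : M₀ ≠ 0) (Q L : V →ₗ[ℝ] V)
    (hkerQ : LinearMap.ker Q = Submodule.span ℝ {M₀})
    (hkerL : LinearMap.ker L = Submodule.span ℝ {M₀})
    (ν : ℕ) (hν : 1 ≤ ν)
    (A Atil : Matrix (Fin ν) (Fin ν) ℝ) (hA : IsUnit A)
    (hAlow : ∀ k j, k < j → A k j = 0)
    (hAtillow : ∀ k j, k ≤ j → Atil k j = 0)
    (R : Fin ν → V)
    (hR : ∀ k, ∑ j, Atil k j • (Q (R j) - L (R j)) + ∑ j, A k j • L (R j) = 0) :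
    ∀ k, Q (R k) = 0 ∧ L (R k) = 0 ∧ R k ∈ Submodule.span ℝ {M₀} := by
  have hdiag : ∀ k, A k k ≠ 0 := by
    have hdet : A.det ≠ 0 := ((Matrix.isUnit_iff_isUnit_det A).mp hA).ne_zero
    rw [Matrix.det_of_lowerTriangular A fun i j hij => hAlow i j hij] at hdet
    exact fun k => Finset.prod_ne_zero_iff.mp hdet k (Finset.mem_univ k)
  have hLQ : ∀ x, L x = 0 → Q x = 0 := by
    intro x hx
    rwa [← LinearMap.mem_ker, hkerQ, ← hkerL, LinearMap.mem_ker]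
  have hL : ∀ k, L (R k) = 0 := by
    intro k
    induction k using WellFoundedLT.induction with
    | ind k ih =>
      have h := hR k
      have hexpl : ∑ j, Atil k j • (Q (R j) - L (R j)) = 0 := by
        refine Finset.sum_eq_zero fun j _ => ?_
        rcases lt_or_ge j k with hj | hj
        · rw [ih j hj, hLQ _ (ih j hj), sub_zero, smul_zero]
        · rw [hAtillow k j hj, zero_smul]
      have himpl : ∑ j, A k j • L (R j) = A k k • L (R k) := by
        refine Finset.sum_eq_single k (fun j _ hjk => ?_) (by simp)
        rcases lt_or_gt_of_ne hjk with hj | hj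
        · rw [ih j hj, smul_zero]
        · rw [hAlow k j hj, zero_smul]
      rw [hexpl, himpl, zero_add] at h
      exact (smul_eq_zero.mp h).resolve_left (hdiag k)
  exact fun k => ⟨hLQ _ (hL k), hL k, hkerL ▸ LinearMap.mem_ker.mpr (hL k)⟩
end

section
/- Let V be a real vector space, ν ≥ 1, Δt ∈ ℝ, ε ≠ 0, r ∈ V, let A be an invertible ν×ν real matrix, Ã a ν×ν real matrix, and w, w̃ ∈ ℝ^ν with w̃ᵀ = wᵀA^{−1}Ã. Let F, S, Λ, G : Fin ν → V and suppose the stages R : Fin ν → V satisfy, for every k, R_k = r + Δt (ÃF)_k + (Δt/ε²) (ÃS)_k + (Δt/ε²) (AΛ)_k + Δt (AG)_k, where (ÃF)_k = Σ_j Ã_{kj} • F_j and similarly for the other products. Then the numerical update r' = r + Δt Σ_k w̃_k • F_k + (Δt/ε²) Σ_k w̃_k • S_k + (Δt/ε²) Σ_k w_k • Λ_k + Δt Σ_k w_k • G_k satisfies r' = r + Δt Σ_k w̃_k • F_k + Δt Σ_k w_k • G_k + Σ_k (wᵀA^{−1})_k • ( R_k − r − Δt(ÃF)_k − Δt(AG)_k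 ); in particular the terms carrying the factor 1/ε² cancel and r' does not depend on ε. -/
/-!
Put `u = wᵀA⁻¹`. By the stage equations, the bracket paired with `u k` is the stiff part
`(Δt / ε²) • (ÃS + AΛ)_k` of stage `k`. Summing against `u` replaces `Ã` by `uÃ = w̃` and `A` by
`uA = w` (`sum_smul_sum_smul`, associativity of vector-matrix products, with `A` invertible), which
gives exactly the `1/ε²` terms of the update.
-/

/-- Associativity `u (M x) = (u M) x` for a real matrix acting on a tuple of vectors of `V`. -/
theorem sum_smul_sum_smul {V : Type*} [AddCommGroup V] [Module ℝ V] {n : ℕ}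
    (u : Fin n → ℝ) (M : Matrix (Fin n) (Fin n) ℝ) (x : Fin n → V) :
    ∑ k, u k • ∑ j, M k j • x j = ∑ j, Matrix.vecMul u M j • x j := by
  simp only [Matrix.vecMul, dotProduct, Finset.sum_smul, Finset.smul_sum, smul_smul]
  exact Finset.sum_comm

/-- Cancellation of the stiff `1/ε²` terms in the penalized IMEX update: under the
compatibility condition `w̃ᵀ = wᵀA⁻¹Ã`, the numerical update can be rewritten
without any `1/ε²` factor, hence does not depend on `ε`. Here `Atil = Ã`,
`wtil = w̃`, `S` abstracts the explicitly treated stiff terms `(Q - L)(R)` and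
`Lam` the implicitly treated penalization `L(R)`. -/
theorem penalized_update_cancellation (V : Type*) [AddCommGroup V] [Module ℝ V]
    (ν : ℕ) (hν : 1 ≤ ν) (Δt ε : ℝ) (hε : ε ≠ 0) (r : V)
    (A Atil : Matrix (Fin ν) (Fin ν) ℝ) (hA : IsUnit A)
    (w wtil : Fin ν → ℝ)
    (hwtil : Matrix.vecMul (Matrix.vecMul w A⁻¹) Atil = wtil)
    (F S Lam G R : Fin ν → V)
    (hR : ∀ k, R k = r + Δt • ∑ j, Atil k j • F j
        + (Δt / ε ^ 2) • ∑ j, Atil k j • S j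
        + (Δt / ε ^ 2) • ∑ j, A k j • Lam j
        + Δt • ∑ j, A k j • G j)
    (r' : V)
    (hr' : r' = r + Δt • ∑ k, wtil k • F k
        + (Δt / ε ^ 2) • ∑ k, wtil k • S k
        + (Δt / ε ^ 2) • ∑ k, w k • Lam k
        + Δt • ∑ k, w k • G k) :
    r' = r + Δt • ∑ k, wtil k • F k + Δt • ∑ k, w k • G k +
      ∑ k, Matrix.vecMul w A⁻¹ k •
        (R k - r - Δt • ∑ j, Atil k j • F j - Δt • ∑ j, A k j • G j) := by
  have hw : Matrix.vecMul (Matrix.vecMul w A⁻¹) A = w := by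
    rw [Matrix.vecMul_vecMul, Matrix.nonsing_inv_mul A ((Matrix.isUnit_iff_isUnit_det A).1 hA),
      Matrix.vecMul_one]
  have hstage : ∀ k, R k - r - Δt • ∑ j, Atil k j • F j - Δt • ∑ j, A k j • G j
      = (Δt / ε ^ 2) • ((∑ j, Atil k j • S j) + ∑ j, A k j • Lam j) := by
    intro k
    rw [hR k, smul_add]
    abel
  have hsum : ∑ k, Matrix.vecMul w A⁻¹ k •
        (R k - r - Δt • ∑ j, Atil k j • F j - Δt • ∑ j, A k j • G j)
      = (Δt / ε ^ 2) • ∑ k, wtil k • S k + (Δt / ε ^ 2) • ∑ k, w k • Lam k := by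
    simp only [hstage, smul_comm _ (Δt / ε ^ 2)]
    rw [← Finset.smul_sum]
    simp only [smul_add, Finset.sum_add_distrib]
    rw [sum_smul_sum_smul, sum_smul_sum_smul, hwtil, hw]
  rw [hsum, hr']
  abel
end
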